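/- arXiv:2412.01397 — 3 statements merged into one kernel-verified Lean document; each statement's English description precedes it below -/
import Mathlib

section
/- Let d ≥ 1, let P ∈ S^d and let 0 < ε < π/2. Then the open ε-neighborhood of H(P) in the angular metric equals the union of the closed hemispheres centered at points of the open angular ε-ball around P; that is, {Q ∈ S^d : ∃ R ∈ H(P), arccos⟪Q,R⟫ < ε} = ⋃_{P₁ ∈ S^d, arccos⟪P,P₁⟫ < ε} H(P₁). -/
open scoped RealInnerProductSpace Pointwise

noncomputable section

/-- Euclidean space `ℝ^{d+1}`. -/
abbrev E (d : ℕ) : Type := EuclideanSpace ℝ (Fin (d + 1))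

/-- The unit sphere `S^d ⊆ ℝ^{d+1}`. -/
def sph (d : ℕ) : Set (E d) := {x | ‖x‖ = 1}

/-- The closed hemisphere `H(P)` centered at `P`. -/
def hemi {d : ℕ} (P : E d) : Set (E d) := {Q ∈ sph d | 0 ≤ ⟪P, Q⟫}

/-- The spherical polar set `W°`. -/
def polar {d : ℕ} (W : Set (E d)) : Set (E d) := {Q ∈ sph d | ∀ P ∈ W, 0 ≤ ⟪P, Q⟫}

/-- The semi-separation center set `𝒞(W₁, W₂)`. -/
def ssc {d : ℕ} (W₁ W₂ : Set (E d)) : Set (E d) :=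
  {P ∈ sph d | (∀ Q ∈ W₁, 0 ≤ ⟪P, Q⟫) ∧ ∀ R ∈ W₂, ⟪P, R⟫ ≤ 0}

/-- `W ⊆ S^d` is hemispherical if it misses some closed hemisphere. -/
def hemispherical {d : ℕ} (W : Set (E d)) : Prop := ∃ P ∈ sph d, W ∩ hemi P = ∅

/-- A hemispherical set is spherically convex if it contains the normalized segment
between any two of its points. -/
def sphConvex {d : ℕ} (W : Set (E d)) : Prop :=
  hemispherical W ∧ ∀ P ∈ W, ∀ Q ∈ W, ∀ t : ℝ, t ∈ Set.Icc (0 : ℝ) 1 →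
    (‖t • P + (1 - t) • Q‖)⁻¹ • (t • P + (1 - t) • Q) ∈ W

/-- The spherical convex hull `s-conv(W)`: normalized convex combinations of
finitely many points of `W`. -/
def sconv {d : ℕ} (W : Set (E d)) : Set (E d) :=
  {x | ∃ (n : ℕ) (P : Fin n → E d) (l : Fin n → ℝ),
    (∀ i, P i ∈ W) ∧ (∀ i, 0 ≤ l i) ∧ (∑ i, l i) = 1 ∧
    x = (‖∑ i, l i • P i‖)⁻¹ • (∑ i, l i • P i)}

/-!
The reflection in the perpendicular bisector of `P` and `Q` exchanges `P` and `Q`. It therefore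
turns a point `R` of `H(P)` within angular distance `ε` of `Q` into a point `P₁` within angular
distance `ε` of `P` such that `Q ∈ H(P₁)`, and conversely.
-/

section InnerProductSpace

variable {V : Type*} [NormedAddCommGroup V] [InnerProductSpace ℝ V]

/-- The closed hemisphere centered at `P` of the unit sphere of a real inner product space,
generalizing `hemi`. -/
def closedHemisphere (P : V) : Set V := {Q ∈ Metric.sphere 0 1 | 0 ≤ ⟪P, Q⟫}

theorem exists_linearIsometryEquiv_swap {x y : V} (h : ‖x‖ = ‖y‖) :
    ∃ f : V ≃ₗᵢ[ℝ] V, f x = y ∧ f y = x :=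
  have hxy : (ℝ ∙ (x - y))ᗮ.reflection x = y := Submodule.reflection_sub h
  ⟨(ℝ ∙ (x - y))ᗮ.reflection, hxy, (Submodule.reflection_involutive _).eq_iff.2 hxy.symm⟩

theorem exists_mem_sphere_inner_swap {x y : V} (h : ‖x‖ = ‖y‖) (r : ℝ) (p : ℝ → ℝ → Prop) :
    (∃ z ∈ Metric.sphere (0 : V) r, p ⟪x, z⟫ ⟪y, z⟫) ↔
      ∃ z ∈ Metric.sphere (0 : V) r, p ⟪y, z⟫ ⟪x, z⟫ := by
  obtain ⟨f, hfx, hfy⟩ := exists_linearIsometryEquiv_swap h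
  have inner_x (z : V) : ⟪x, f z⟫ = ⟪y, z⟫ := by rw [← hfy, f.inner_map_map]
  have inner_y (z : V) : ⟪y, f z⟫ = ⟪x, z⟫ := by rw [← hfx, f.inner_map_map]
  refine f.toEquiv.exists_congr fun z ↦ ?_
  simp [inner_x, inner_y]

theorem stmt_0_general {P : V} (hP : ‖P‖ = 1) (ε : ℝ) :
    {Q ∈ Metric.sphere (0 : V) 1 | ∃ R ∈ closedHemisphere P, Real.arccos ⟪Q, R⟫ < ε} =
      ⋃ P₁ ∈ {P₁ ∈ Metric.sphere (0 : V) 1 | Real.arccos ⟪P, P₁⟫ < ε}, closedHemisphere P₁ := by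
  ext Q
  by_cases hQ : Q ∈ Metric.sphere (0 : V) 1
  · have norm_eq : ‖P‖ = ‖Q‖ := hP.trans (mem_sphere_zero_iff_norm.1 hQ).symm
    calc
      _ ↔ ∃ R ∈ Metric.sphere (0 : V) 1, 0 ≤ ⟪P, R⟫ ∧ Real.arccos ⟪Q, R⟫ < ε := by
        simp only [closedHemisphere, Set.mem_ofPred_eq, hQ, true_and, and_assoc]
      _ ↔ ∃ P₁ ∈ Metric.sphere (0 : V) 1, 0 ≤ ⟪Q, P₁⟫ ∧ Real.arccos ⟪P, P₁⟫ < ε :=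
        exists_mem_sphere_inner_swap norm_eq 1 fun s t ↦ 0 ≤ s ∧ Real.arccos t < ε
      _ ↔ _ := by
        simp only [closedHemisphere, Set.mem_iUnion, Set.mem_ofPred_eq, exists_prop, hQ, true_and,
          and_assoc, and_comm (a := (0 : ℝ) ≤ _) (b := _ < ε), real_inner_comm Q]
  · simp only [closedHemisphere, Set.mem_iUnion, Set.mem_ofPred_eq, hQ, false_and, exists_false]

end InnerProductSpace

theorem sph_eq_sphere (d : ℕ) : sph d = Metric.sphere 0 1 := by
  ext x
  exact mem_sphere_zero_iff_norm.symm

theorem hemi_eq_closedHemisphere {d : ℕ} (P : E d) : hemi P = closedHemisphere P := by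
  rw [hemi, closedHemisphere, sph_eq_sphere]

/-- The open ε-neighborhood of the hemisphere `H(P)` (angular metric) is the union of the
hemispheres centered at points of the open angular ε-ball around `P`. -/
theorem stmt_0 (d : ℕ) (hd : 1 ≤ d) (P : E d) (hP : P ∈ sph d)
    (ε : ℝ) (hε : 0 < ε) (hε' : ε < Real.pi / 2) :
    {Q ∈ sph d | ∃ R ∈ hemi P, Real.arccos ⟪Q, R⟫ < ε} =
      ⋃ P₁ ∈ {P₁ ∈ sph d | Real.arccos ⟪P, P₁⟫ < ε}, hemi P₁ := by
  simpa only [sph_eq_sphere, hemi_eq_closedHemisphere] using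
    stmt_0_general (mem_sphere_zero_iff_norm.1 (sph_eq_sphere d ▸ hP)) ε
end
end

section
/- Let W₁, W₂ be nonempty closed spherically convex subsets of S^d such that W₁ ∪ (−W₂) is hemispherical. Then (𝒞(W₁,W₂))° = s-conv(W₁ ∪ (−W₂)) and 𝒞(W₁,W₂) = (s-conv(W₁ ∪ (−W₂)))°. -/
open scoped RealInnerProductSpace Pointwise

noncomputable section

/-!
`W°` is the trace on the sphere of the dual cone of `W`, and `W°°` that of the double dual cone: the
unit vectors of a cone determine its dual. By Farkas' lemma the double dual cone is the closure of
the conic hull of `W`. If `W` is compact and lies in an open hemisphere, then its convex hull is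
compact and misses the origin, which makes the conic hull closed, with trace `s-conv(W)` on the
sphere. So `W°° = s-conv(W)`, hence `s-conv(W)° = W°°° = W°`, and one takes `W = W₁ ∪ (-W₂)`, for
which `W° = 𝒞(W₁,W₂)`.
-/

section ConvexCombinations

variable {V : Type*} [AddCommGroup V] [Module ℝ V] {s : Set V}

/-- The set of all convex combinations of `n` points of `s`, repetitions being allowed, presented as
an image of `stdSimplex × sⁿ` so that it is visibly compact when `s` is. -/
def convexCombinations (n : ℕ) (s : Set V) : Set V :=
  (fun p : (Fin n → ℝ) × (Fin n → V) ↦ ∑ i, p.1 i • p.2 i) ''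
    (stdSimplex ℝ (Fin n) ×ˢ Set.univ.pi fun _ ↦ s)

lemma sum_smul_mem_convexCombinations {ι : Type*} [Fintype ι] {w : ι → ℝ} {z : ι → V}
    (hw₀ : ∀ i, 0 ≤ w i) (hw₁ : ∑ i, w i = 1) (hz : ∀ i, z i ∈ s) :
    ∑ i, w i • z i ∈ convexCombinations (Fintype.card ι) s := by
  let e := (Fintype.equivFin ι).symm
  refine ⟨(w ∘ e, z ∘ e), ⟨⟨fun i ↦ hw₀ (e i), ?_⟩, fun i _ ↦ hz (e i)⟩, ?_⟩
  · exact (e.sum_comp w).trans hw₁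
  · exact e.sum_comp fun i ↦ w i • z i

lemma convexCombinations_subset_convexHull (n : ℕ) (s : Set V) :
    convexCombinations n s ⊆ convexHull ℝ s := by
  rintro _ ⟨⟨w, z⟩, ⟨⟨hw₀, hw₁⟩, hz⟩, rfl⟩
  exact mem_convexHull_of_exists_fintype w z hw₀ hw₁ (fun i ↦ hz i trivial) rfl

lemma convexHull_eq_iUnion_convexCombinations (s : Set V) :
    convexHull ℝ s = ⋃ n, convexCombinations n s := by
  refine Set.Subset.antisymm (fun x hx ↦ ?_)
    (Set.iUnion_subset fun n ↦ convexCombinations_subset_convexHull n s)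
  obtain ⟨ι, _, w, z, hw₀, hw₁, hz, rfl⟩ := mem_convexHull_iff_exists_fintype.1 hx
  exact Set.mem_iUnion_of_mem _ (sum_smul_mem_convexCombinations hw₀ hw₁ hz)

lemma convexHull_eq_biUnion_convexCombinations [FiniteDimensional ℝ V] (s : Set V) :
    convexHull ℝ s = ⋃ n ∈ Set.Iic (Module.finrank ℝ V + 1), convexCombinations n s := by
  refine Set.Subset.antisymm (fun x hx ↦ ?_)
    (Set.iUnion₂_subset fun n _ ↦ convexCombinations_subset_convexHull n s)
  obtain ⟨ι, _, z, w, hz, hz_indep, hw₀, hw₁, rfl⟩ := eq_pos_convex_span_of_mem_convexHull hx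
  have card_le : Fintype.card ι ≤ Module.finrank ℝ V + 1 :=
    hz_indep.card_le_finrank_succ.trans (Nat.succ_le_succ (Submodule.finrank_le _))
  exact Set.mem_biUnion card_le <|
    sum_smul_mem_convexCombinations (fun i ↦ (hw₀ i).le) hw₁ fun i ↦ hz ⟨i, rfl⟩

variable [TopologicalSpace V] [ContinuousAdd V] [ContinuousSMul ℝ V]

lemma isCompact_convexCombinations (n : ℕ) (hs : IsCompact s) :
    IsCompact (convexCombinations n s) :=
  ((isCompact_stdSimplex ℝ (Fin n)).prod (isCompact_univ_pi fun _ ↦ hs)).image (by fun_prop)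

lemma isCompact_convexHull [FiniteDimensional ℝ V] (hs : IsCompact s) :
    IsCompact (convexHull ℝ s) := by
  rw [convexHull_eq_biUnion_convexCombinations]
  exact (Set.finite_Iic _).isCompact_biUnion fun n _ ↦ isCompact_convexCombinations n hs

end ConvexCombinations

section ConicHull

lemma coe_pointedConeHull {𝕜 V : Type*} [Semiring 𝕜] [PartialOrder 𝕜] [IsOrderedRing 𝕜]
    [AddCommMonoid V] [Module 𝕜 V] (s : Set V) :
    (PointedCone.hull 𝕜 s : Set V) = insert 0 (ConvexCone.hull 𝕜 s : Set V) := by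
  apply Set.Subset.antisymm
  · intro x hx
    induction hx using Submodule.span_induction with
    | mem x hx => exact .inr (ConvexCone.subset_hull hx)
    | zero => exact .inl rfl
    | add x y _ _ hx hy =>
      rcases hx with rfl | hx
      · rwa [zero_add]
      rcases hy with rfl | hy
      · rw [add_zero]; exact .inr hx
      · exact .inr (add_mem hx hy)
    | smul c x _ hx =>
      rcases hx with rfl | hx
      · exact .inl (smul_zero c)
      rcases c.2.eq_or_lt with hc | hc
      · obtain rfl : c = 0 := Subtype.ext hc.symm
        exact .inl (zero_smul _ x)
      · exact .inr ((ConvexCone.hull 𝕜 s).smul_mem hc hx)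
  · have hull_le : ConvexCone.hull 𝕜 s ≤ (PointedCone.hull 𝕜 s).toConvexCone :=
      ConvexCone.hull_min PointedCone.subset_hull
    exact Set.insert_subset (zero_mem _) hull_le

lemma convexConeHull_convexHull {𝕜 V : Type*} [Semiring 𝕜] [PartialOrder 𝕜] [AddCommMonoid V]
    [Module 𝕜 V] (s : Set V) :
    ConvexCone.hull 𝕜 (convexHull 𝕜 s) = ConvexCone.hull 𝕜 s :=
  le_antisymm
    (ConvexCone.hull_min (convexHull_min ConvexCone.subset_hull (ConvexCone.hull 𝕜 s).convex))
    (ConvexCone.hull_min ((subset_convexHull 𝕜 s).trans ConvexCone.subset_hull))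

lemma mem_pointedConeHull_iff_exists_sameRay {𝕜 V : Type*} [Field 𝕜] [LinearOrder 𝕜]
    [IsStrictOrderedRing 𝕜] [AddCommGroup V] [Module 𝕜 V] {s : Set V} {x : V}
    (h0 : 0 ∉ convexHull 𝕜 s) (hx : x ≠ 0) :
    x ∈ PointedCone.hull 𝕜 s ↔ ∃ k ∈ convexHull 𝕜 s, SameRay 𝕜 x k := by
  rw [← SetLike.mem_coe, coe_pointedConeHull, Set.mem_insert_iff, or_iff_right hx,
    ← convexConeHull_convexHull, SetLike.mem_coe,
    ConvexCone.mem_hull_of_convex (convex_convexHull 𝕜 s)]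
  constructor
  · rintro ⟨c, hc, k, hk, rfl⟩
    exact ⟨k, hk, .sameRay_pos_smul_left k hc⟩
  · rintro ⟨k, hk, hxk⟩
    obtain ⟨c, hc, rfl⟩ := hxk.symm.exists_pos_left (ne_of_mem_of_not_mem hk h0) hx
    exact ⟨c, hc, k, hk, rfl⟩

end ConicHull

section ClosedCone

variable {V : Type*} [NormedAddCommGroup V] [NormedSpace ℝ V] {s : Set V}

lemma isClosed_setOfPred_exists_mem_sameRay (hs : IsCompact s) :
    IsClosed {x | ∃ k ∈ s, SameRay ℝ x k} := by
  have : CompactSpace s := isCompact_iff_compactSpace.1 hs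
  have isClosed_pairs : IsClosed {p : V × s | ‖p.1‖ • (p.2 : V) = ‖(p.2 : V)‖ • p.1} :=
    isClosed_eq (by fun_prop) (by fun_prop)
  convert isClosedMap_fst_of_compactSpace _ isClosed_pairs using 1
  ext x
  simp [sameRay_iff_norm_smul_eq]

lemma isClosed_pointedConeHull [FiniteDimensional ℝ V] (hs : IsCompact s)
    (h0 : 0 ∉ convexHull ℝ s) : IsClosed (PointedCone.hull ℝ s : Set V) := by
  have hull_eq : (PointedCone.hull ℝ s : Set V) =
      {0} ∪ {x | ∃ k ∈ convexHull ℝ s, SameRay ℝ x k} := by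
    ext x
    rcases eq_or_ne x 0 with rfl | hx
    · simp
    · simpa [hx] using mem_pointedConeHull_iff_exists_sameRay h0 hx
  rw [hull_eq]
  exact isClosed_singleton.union (isClosed_setOfPred_exists_mem_sameRay (isCompact_convexHull hs))

end ClosedCone

section InnerDual

variable {V : Type*} [NormedAddCommGroup V] [InnerProductSpace ℝ V]

lemma zero_notMem_convexHull_of_inner_neg {s : Set V} {v : V} (h : ∀ x ∈ s, ⟪v, x⟫ < 0) :
    0 ∉ convexHull ℝ s := by
  intro h0
  have convexHull_subset : convexHull ℝ s ⊆ {x | ⟪v, x⟫ < 0} :=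
    convexHull_min h (convex_halfSpace_lt (innerₗ V v).isLinear 0)
  simpa using convexHull_subset h0

variable [CompleteSpace V]

lemma coe_innerDual_innerDual (s : Set V) :
    (ProperCone.innerDual (ProperCone.innerDual s : Set V) : Set V) =
      closure (PointedCone.hull ℝ s) := by
  set D := ProperCone.innerDual (ProperCone.innerDual s : Set V)
  set C : ProperCone ℝ V := Submodule.closure (PointedCone.hull ℝ s)
  have subset_C : s ⊆ C := PointedCone.subset_hull.trans subset_closure
  have D_le : D ≤ C := calc
    D ≤ ProperCone.innerDual (ProperCone.innerDual (C : Set V) : Set V) :=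
      ProperCone.innerDual_le_innerDual (ProperCone.innerDual_le_innerDual subset_C)
    _ = C := ProperCone.innerDual_innerDual C
  have subset_D : s ⊆ D := fun x hx ↦ ProperCone.mem_innerDual.2 fun y hy ↦ by
    rw [real_inner_comm]; exact hy hx
  exact Set.Subset.antisymm D_le
    (closure_minimal (Submodule.span_le.2 subset_D) D.isClosed)

lemma innerDual_sphere_inter (C : PointedCone ℝ V) :
    ProperCone.innerDual (Metric.sphere 0 1 ∩ C : Set V) = ProperCone.innerDual (C : Set V) := by
  refine le_antisymm (fun y hy x hx ↦ ?_)
    (ProperCone.innerDual_le_innerDual Set.inter_subset_right)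
  change 0 ≤ ⟪x, y⟫
  rcases eq_or_ne x 0 with rfl | hx0
  · exact (inner_zero_left y).ge
  · have normalized_mem : ‖x‖⁻¹ • x ∈ Metric.sphere 0 1 ∩ (C : Set V) :=
      ⟨by simp [norm_smul, hx0], C.smul_mem (inv_nonneg.2 (norm_nonneg x)) hx⟩
    have inner_normalized : 0 ≤ ‖x‖⁻¹ * ⟪x, y⟫ := by
      rw [← real_inner_smul_left]; exact hy normalized_mem
    exact (mul_nonneg_iff_of_pos_left (by positivity)).1 inner_normalized

end InnerDual

section SphericalPolar

variable {d : ℕ} {W : Set (E d)}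

lemma polar_eq_sphere_inter_innerDual (W : Set (E d)) :
    polar W = Metric.sphere 0 1 ∩ (ProperCone.innerDual W : Set (E d)) := by
  ext Q
  simp [polar, sph]

lemma ssc_eq_polar_union_neg (W₁ W₂ : Set (E d)) : ssc W₁ W₂ = polar (W₁ ∪ -W₂) := by
  ext P
  have forall_neg_iff : (∀ R ∈ -W₂, 0 ≤ ⟪R, P⟫) ↔ ∀ R ∈ W₂, ⟪P, R⟫ ≤ 0 := by
    rw [← Set.image_neg_eq_neg, Set.forall_mem_image]
    simp only [inner_neg_left, neg_nonneg, real_inner_comm]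
  have forall_iff : (∀ Q ∈ W₁, 0 ≤ ⟪Q, P⟫) ↔ ∀ Q ∈ W₁, 0 ≤ ⟪P, Q⟫ := by
    simp only [real_inner_comm]
  simp only [ssc, polar, Set.mem_ofPred_eq, Set.mem_union, or_imp, forall_and, forall_iff,
    forall_neg_iff]

lemma polar_anti {W W' : Set (E d)} (h : W ⊆ W') : polar W' ⊆ polar W :=
  fun _ hQ ↦ ⟨hQ.1, fun P hP ↦ hQ.2 P (h hP)⟩

lemma subset_polar_polar (hW : W ⊆ sph d) : W ⊆ polar (polar W) :=
  fun Q hQ ↦ ⟨hW hQ, fun P hP ↦ by rw [real_inner_comm]; exact hP.2 Q hQ⟩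

lemma polar_polar_polar (hW : W ⊆ sph d) : polar (polar (polar W)) = polar W :=
  Set.Subset.antisymm (polar_anti (subset_polar_polar hW)) (subset_polar_polar fun _ hP ↦ hP.1)

lemma zero_notMem_convexHull_of_hemispherical (hW : W ⊆ sph d) (h : hemispherical W) :
    0 ∉ convexHull ℝ W := by
  obtain ⟨P, -, hP⟩ := h
  refine zero_notMem_convexHull_of_inner_neg (v := P) fun Q hQ ↦ not_le.1 fun hPQ ↦ ?_
  exact (hP.subset ⟨hQ, hW hQ, hPQ⟩).elim

lemma sconv_eq_image_convexHull (W : Set (E d)) :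
    sconv W = NormedSpace.normalize '' convexHull ℝ W := by
  rw [convexHull_eq_iUnion_convexCombinations]
  ext x
  constructor
  · rintro ⟨n, P, l, hP, hl₀, hl₁, rfl⟩
    exact ⟨_, Set.mem_iUnion_of_mem n ⟨(l, P), ⟨⟨hl₀, hl₁⟩, fun i _ ↦ hP i⟩, rfl⟩, rfl⟩
  · rintro ⟨_, hk, rfl⟩
    obtain ⟨n, ⟨l, P⟩, ⟨⟨hl₀, hl₁⟩, hP⟩, rfl⟩ := Set.mem_iUnion.1 hk
    exact ⟨n, P, l, fun i ↦ hP i trivial, hl₀, hl₁, rfl⟩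

lemma sconv_eq_sphere_inter_hull (h0 : 0 ∉ convexHull ℝ W) :
    sconv W = Metric.sphere 0 1 ∩ (PointedCone.hull ℝ W : Set (E d)) := by
  rw [sconv_eq_image_convexHull]
  ext x
  constructor
  · rintro ⟨k, hk, rfl⟩
    have hk0 : k ≠ 0 := ne_of_mem_of_not_mem hk h0
    have hull_normalize : NormedSpace.normalize k ∈ PointedCone.hull ℝ W :=
      (mem_pointedConeHull_iff_exists_sameRay h0 (by simpa using hk0)).2
        ⟨k, hk, .sameRay_pos_smul_left k (inv_pos.2 (norm_pos_iff.2 hk0))⟩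
    exact ⟨by simpa using hk0, hull_normalize⟩
  · rintro ⟨hx, hx_hull⟩
    have hx1 : ‖x‖ = 1 := by simpa using hx
    have hx0 : x ≠ 0 := norm_ne_zero_iff.1 (by simp [hx1])
    obtain ⟨k, hk, hxk⟩ := (mem_pointedConeHull_iff_exists_sameRay h0 hx0).1 hx_hull
    have hk0 : k ≠ 0 := ne_of_mem_of_not_mem hk h0
    refine ⟨k, hk, ?_⟩
    calc NormedSpace.normalize k = NormedSpace.normalize x :=
          ((sameRay_iff_inv_norm_smul_eq_of_ne hx0 hk0).1 hxk).symm
      _ = x := NormedSpace.normalize_eq_self_of_norm_eq_one hx1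

lemma polar_polar_eq_sconv (hW : W ⊆ sph d) (hcl : IsClosed W) (hhemi : hemispherical W) :
    polar (polar W) = sconv W := by
  have compact : IsCompact W :=
    (isCompact_sphere (0 : E d) 1).of_isClosed_subset hcl
      fun Q hQ ↦ mem_sphere_zero_iff_norm.2 (hW hQ)
  have h0 : 0 ∉ convexHull ℝ W := zero_notMem_convexHull_of_hemispherical hW hhemi
  calc polar (polar W)
      = Metric.sphere 0 1 ∩ (ProperCone.innerDual (ProperCone.innerDual W : Set (E d))) := by
        rw [polar_eq_sphere_inter_innerDual, polar_eq_sphere_inter_innerDual W]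
        congr 2
        exact innerDual_sphere_inter (ProperCone.innerDual W).toPointedCone
    _ = Metric.sphere 0 1 ∩ (PointedCone.hull ℝ W : Set (E d)) := by
        rw [coe_innerDual_innerDual, (isClosed_pointedConeHull compact h0).closure_eq]
    _ = sconv W := (sconv_eq_sphere_inter_hull h0).symm

end SphericalPolar

theorem stmt_6_general (d : ℕ) (W₁ W₂ : Set (E d)) (hW₁ : W₁ ⊆ sph d) (hW₂ : W₂ ⊆ sph d)
    (hcl₁ : IsClosed W₁) (hcl₂ : IsClosed W₂) (hhemi : hemispherical (W₁ ∪ (-W₂))) :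
    polar (ssc W₁ W₂) = sconv (W₁ ∪ (-W₂)) ∧
      ssc W₁ W₂ = polar (sconv (W₁ ∪ (-W₂))) := by
  have union_subset : W₁ ∪ -W₂ ⊆ sph d :=
    Set.union_subset hW₁ fun R hR ↦ (norm_neg R).symm.trans (hW₂ hR)
  have polar_polar : polar (polar (W₁ ∪ -W₂)) = sconv (W₁ ∪ -W₂) :=
    polar_polar_eq_sconv union_subset (hcl₁.union hcl₂.neg) hhemi
  rw [ssc_eq_polar_union_neg, ← polar_polar]
  exact ⟨rfl, (polar_polar_polar union_subset).symm⟩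

/-- `𝒞(W₁,W₂)° = s-conv(W₁ ∪ (−W₂))` and `𝒞(W₁,W₂) = (s-conv(W₁ ∪ (−W₂)))°`. -/
theorem stmt_6 (d : ℕ) (W₁ W₂ : Set (E d)) (hW₁ : W₁ ⊆ sph d) (hW₂ : W₂ ⊆ sph d)
    (hne₁ : W₁.Nonempty) (hne₂ : W₂.Nonempty)
    (hcl₁ : IsClosed W₁) (hcl₂ : IsClosed W₂)
    (hcv₁ : sphConvex W₁) (hcv₂ : sphConvex W₂)
    (hhemi : hemispherical (W₁ ∪ (-W₂))) :
    polar (ssc W₁ W₂) = sconv (W₁ ∪ (-W₂)) ∧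
      ssc W₁ W₂ = polar (sconv (W₁ ∪ (-W₂))) :=
  stmt_6_general d W₁ W₂ hW₁ hW₂ hcl₁ hcl₂ hhemi
end
end

section
/- Let W₁,…,W_m and Y₁,…,Y_m be nonempty closed spherically convex subsets of S^d and suppose X = W_i ∩ Y_i for every i ∈ {1,…,m}, with X nonempty. Then (1) X = 𝒞(⋃_{i=1}^m W_i°, ⋃_{i=1}^m (−(Y_i°))); and (2) if moreover ⋃_{i=1}^m W_i° and ⋃_{i=1}^m (−(Y_i°)) are hemispherical, then X = 𝒞(s-conv(⋃_{i=1}^m W_i°), s-conv(⋃_{i=1}^m (−(Y_i°)))). -/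
open scoped RealInnerProductSpace Pointwise

noncomputable section

/-!
The spherical polar is the trace on the sphere of the inner dual cone. A closed spherically convex
set is the trace of a closed convex cone, so the bipolar theorem for proper cones gives `W°° = W`.
Since `𝒞(A, B) = A° ∩ -(B°)` and polarity turns unions into intersections,
`𝒞(⋃ W_i°, ⋃ -(Y_i°)) = ⋂ W_i°° ∩ ⋂ Y_i°° = ⋂ W_i ∩ ⋂ Y_i`. A set and its spherical convex hull
satisfy the same linear inequalities, hence have the same polar.
-/

open NormedSpace

section Normalize

variable {V : Type*} [NormedAddCommGroup V]

theorem continuousOn_normalize [NormedSpace ℝ V] : ContinuousOn (normalize : V → V) {0}ᶜ :=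
  (continuousOn_id.norm.inv₀ fun _ hx => norm_ne_zero_iff.mpr hx).smul continuousOn_id

theorem isClosed_setOf_normalize_mem [NormedSpace ℝ V] {W : Set V} (hW : IsClosed W) :
    IsClosed {x : V | x ≠ 0 → normalize x ∈ W} := by
  have hopen : IsOpen ({0}ᶜ ∩ normalize ⁻¹' Wᶜ : Set V) :=
    continuousOn_normalize.isOpen_inter_preimage isOpen_compl_singleton hW.isOpen_compl
  convert hopen.isClosed_compl using 1
  ext x
  simp [imp_iff_not_or]

theorem inner_normalize_left_nonneg_iff [InnerProductSpace ℝ V] {x y : V} :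
    0 ≤ ⟪normalize x, y⟫ ↔ 0 ≤ ⟪x, y⟫ := by
  rcases eq_or_ne x 0 with rfl | hx
  · simp
  · rw [NormedSpace.normalize, real_inner_smul_left, mul_nonneg_iff_of_pos_left (by positivity)]

theorem inner_normalize_right_nonneg_iff [InnerProductSpace ℝ V] {x y : V} :
    0 ≤ ⟪x, normalize y⟫ ↔ 0 ≤ ⟪x, y⟫ := by
  rw [real_inner_comm, inner_normalize_left_nonneg_iff, real_inner_comm]

end Normalize

section Polar

variable {d : ℕ}

theorem polar_eq_sph_inter_innerDual (W : Set (E d)) :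
    polar W = sph d ∩ ProperCone.innerDual W := rfl

theorem polar_neg (W : Set (E d)) : polar (-W) = -polar W := by
  ext Q
  simp [polar, sph]

theorem polar_iUnion {ι : Sort*} [Nonempty ι] (W : ι → Set (E d)) :
    polar (⋃ i, W i) = ⋂ i, polar (W i) := by
  simp_rw [polar_eq_sph_inter_innerDual, ProperCone.innerDual_iUnion, ← Set.inter_iInter]
  simp

theorem ssc_eq_polar_inter_neg_polar (A B : Set (E d)) : ssc A B = polar A ∩ -polar B := by
  ext P
  simp only [ssc, polar, sph, Set.mem_ofPred_eq, Set.mem_inter_iff, Set.mem_neg, norm_neg,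
    inner_neg_right, Left.nonneg_neg_iff, real_inner_comm P]
  tauto

theorem innerDual_polar (W : Set (E d)) :
    ProperCone.innerDual (polar W) =
      ProperCone.innerDual (ProperCone.innerDual W : Set (E d)) := by
  refine le_antisymm (fun P hP Q hQ => ?_)
    (ProperCone.innerDual_le_innerDual Set.inter_subset_right)
  rcases eq_or_ne Q 0 with rfl | hQ0
  · simp
  · have hmem : normalize Q ∈ polar W :=
      ⟨norm_normalize hQ0, fun R hR => inner_normalize_right_nonneg_iff.mpr (hQ hR)⟩
    exact inner_normalize_left_nonneg_iff.mp (ProperCone.mem_innerDual.mp hP hmem)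

end Polar

section SphericalConvexHull

variable {d : ℕ}

theorem normalize_mem_sconv {A : Set (E d)} {x : E d} (hx : x ∈ A) : normalize x ∈ sconv A :=
  ⟨1, fun _ => x, fun _ => 1, fun _ => hx, fun _ => zero_le_one, by simp,
    by simp [NormedSpace.normalize]⟩

-- A vanishing convex combination of `A` puts the origin into `sconv A`, but the origin imposes no
-- condition on the dual cone.
theorem innerDual_sconv (A : Set (E d)) :
    ProperCone.innerDual (sconv A) = ProperCone.innerDual A := by
  ext P
  simp only [ProperCone.mem_innerDual]
  constructor
  · intro hP x hx
    exact inner_normalize_left_nonneg_iff.mp (hP (normalize_mem_sconv hx))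
  · rintro hP _ ⟨n, p, l, hp, hl, -, rfl⟩
    refine inner_normalize_left_nonneg_iff.mpr ?_
    simp_rw [sum_inner, real_inner_smul_left]
    exact Finset.sum_nonneg fun i _ => mul_nonneg (hl i) (hP (hp i))

theorem polar_sconv (A : Set (E d)) : polar (sconv A) = polar A := by
  rw [polar_eq_sph_inter_innerDual, innerDual_sconv, ← polar_eq_sph_inter_innerDual]

theorem ssc_sconv_sconv (A B : Set (E d)) : ssc (sconv A) (sconv B) = ssc A B := by
  simp_rw [ssc_eq_polar_inter_neg_polar, polar_sconv]

end SphericalConvexHull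

section Bipolar

variable {d : ℕ} {W : Set (E d)}

theorem sphConvex.normalize_add_mem (hW : sphConvex W) {x y : E d} (hx : x ≠ 0) (hy : y ≠ 0)
    (hxW : normalize x ∈ W) (hyW : normalize y ∈ W) : normalize (x + y) ∈ W := by
  have hpos : 0 < ‖x‖ + ‖y‖ := by positivity
  set t := ‖x‖ / (‖x‖ + ‖y‖) with ht
  have ht_mem : t ∈ Set.Icc (0 : ℝ) 1 :=
    ⟨by positivity, div_le_one_of_le₀ (by simp) hpos.le⟩
  have hcomb : t • normalize x + (1 - t) • normalize y = (‖x‖ + ‖y‖)⁻¹ • (x + y) := by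
    have ht' : 1 - t = (‖x‖ + ‖y‖)⁻¹ * ‖y‖ := by rw [ht]; field_simp; ring
    rw [ht', ht, div_eq_inv_mul, mul_smul, mul_smul, norm_smul_normalize, norm_smul_normalize,
      smul_add]
  rw [← normalize_smul_of_pos (inv_pos.mpr hpos), ← hcomb]
  exact hW.2 _ hxW _ hyW t ht_mem

/-- The closed convex cone `{r • w | r ≥ 0, w ∈ W}` over a closed spherically convex set `W`.
Membership is tested on the normalized vector, so that the origin belongs even for `W = ∅`. -/
def sphConvex.cone (hW : sphConvex W) (hcl : IsClosed W) : ProperCone ℝ (E d) where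
  carrier := {x | x ≠ 0 → normalize x ∈ W}
  zero_mem' h := absurd rfl h
  add_mem' {x y} hx hy hxy := by
    rcases eq_or_ne x 0 with rfl | hx0
    · simpa using hy (by simpa using hxy)
    rcases eq_or_ne y 0 with rfl | hy0
    · simpa using hx (by simpa using hxy)
    exact hW.normalize_add_mem hx0 hy0 (hx hx0) (hy hy0)
  smul_mem' r x hx hrx := by
    obtain ⟨hr, hx0⟩ := smul_ne_zero_iff.mp hrx
    have hr_pos : (0 : ℝ) < r := r.2.lt_of_ne fun h => hr (Subtype.ext h.symm)
    exact (normalize_smul_of_pos hr_pos x).symm ▸ hx hx0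
  isClosed' := isClosed_setOf_normalize_mem hcl

theorem sphConvex.sph_inter_cone (hW : sphConvex W) (hcl : IsClosed W) (hs : W ⊆ sph d) :
    sph d ∩ hW.cone hcl = W := by
  ext x
  constructor
  · rintro ⟨hx, hxC⟩
    exact normalize_eq_self_of_norm_eq_one hx ▸ hxC (norm_ne_zero_iff.mp (hx.symm ▸ one_ne_zero))
  · exact fun hx => ⟨hs hx, fun _ => (normalize_eq_self_of_norm_eq_one (hs hx)).symm ▸ hx⟩

theorem sphConvex.innerDual_cone (hW : sphConvex W) (hcl : IsClosed W) (hs : W ⊆ sph d) :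
    ProperCone.innerDual (hW.cone hcl : Set (E d)) = ProperCone.innerDual W := by
  have hsub : W ⊆ hW.cone hcl := (hW.sph_inter_cone hcl hs).symm.subset.trans Set.inter_subset_right
  refine le_antisymm (ProperCone.innerDual_le_innerDual hsub) fun Q hQ x hx => ?_
  rcases eq_or_ne x 0 with rfl | hx0
  · simp
  · exact inner_normalize_left_nonneg_iff.mp (ProperCone.mem_innerDual.mp hQ (hx hx0))

theorem sphConvex.polar_polar (hW : sphConvex W) (hcl : IsClosed W) (hs : W ⊆ sph d) :
    polar (polar W) = W := by
  calc polar (polar W)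
      = sph d ∩ ProperCone.innerDual (polar W) := polar_eq_sph_inter_innerDual _
    _ = sph d ∩ ProperCone.innerDual (ProperCone.innerDual W : Set (E d)) := by
      rw [innerDual_polar]
    _ = sph d ∩ hW.cone hcl := by
      rw [← hW.innerDual_cone hcl hs, ProperCone.innerDual_innerDual]
    _ = W := hW.sph_inter_cone hcl hs

end Bipolar

theorem ssc_iUnion_polar_iUnion_neg_polar {d : ℕ} {ι κ : Sort*} [Nonempty ι] [Nonempty κ]
    {W : ι → Set (E d)} {Y : κ → Set (E d)}
    (hWs : ∀ i, W i ⊆ sph d) (hYs : ∀ j, Y j ⊆ sph d)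
    (hWcl : ∀ i, IsClosed (W i)) (hYcl : ∀ j, IsClosed (Y j))
    (hWcv : ∀ i, sphConvex (W i)) (hYcv : ∀ j, sphConvex (Y j)) :
    ssc (⋃ i, polar (W i)) (⋃ j, -polar (Y j)) = (⋂ i, W i) ∩ ⋂ j, Y j := by
  rw [ssc_eq_polar_inter_neg_polar, ← Set.iUnion_neg, polar_neg, neg_neg, polar_iUnion,
    polar_iUnion]
  congr! with i j
  · exact (hWcv i).polar_polar (hWcl i) (hWs i)
  · exact (hYcv j).polar_polar (hYcl j) (hYs j)

theorem stmt_9_general {d : ℕ} {ι : Sort*} [Nonempty ι] {W Y : ι → Set (E d)}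
    (hWs : ∀ i, W i ⊆ sph d) (hYs : ∀ i, Y i ⊆ sph d)
    (hWcl : ∀ i, IsClosed (W i)) (hYcl : ∀ i, IsClosed (Y i))
    (hWcv : ∀ i, sphConvex (W i)) (hYcv : ∀ i, sphConvex (Y i))
    {X : Set (E d)} (hX : ∀ i, X = W i ∩ Y i) :
    X = ssc (⋃ i, polar (W i)) (⋃ i, -polar (Y i)) ∧
      X = ssc (sconv (⋃ i, polar (W i))) (sconv (⋃ i, -polar (Y i))) := by
  rw [ssc_sconv_sconv, and_self, ssc_iUnion_polar_iUnion_neg_polar hWs hYs hWcl hYcl hWcv hYcv,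
    ← Set.iInter_inter_distrib, ← Set.iInter_congr hX, Set.iInter_const]

/-- If `X = W_i ∩ Y_i` for all `i`, then (1) `X = 𝒞(⋃ᵢ W_i°, ⋃ᵢ (−Y_i°))`, and
(2) if the two unions are hemispherical,
`X = 𝒞(s-conv(⋃ᵢ W_i°), s-conv(⋃ᵢ (−Y_i°)))`. -/
theorem stmt_9 (d m : ℕ) (hm : 0 < m)
    (W Y : Fin m → Set (E d))
    (hWs : ∀ i, W i ⊆ sph d) (hYs : ∀ i, Y i ⊆ sph d)
    (hWne : ∀ i, (W i).Nonempty) (hYne : ∀ i, (Y i).Nonempty)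
    (hWcl : ∀ i, IsClosed (W i)) (hYcl : ∀ i, IsClosed (Y i))
    (hWcv : ∀ i, sphConvex (W i)) (hYcv : ∀ i, sphConvex (Y i))
    (X : Set (E d)) (hXne : X.Nonempty) (hX : ∀ i, X = W i ∩ Y i) :
    X = ssc (⋃ i, polar (W i)) (⋃ i, -(polar (Y i))) ∧
      (hemispherical (⋃ i, polar (W i)) → hemispherical (⋃ i, -(polar (Y i))) →
        X = ssc (sconv (⋃ i, polar (W i))) (sconv (⋃ i, -(polar (Y i))))) := by
  have : Nonempty (Fin m) := Fin.pos_iff_nonempty.mp hm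
  exact (stmt_9_general hWs hYs hWcl hYcl hWcv hYcv hX).imp_right fun h _ _ => h
end
end
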